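/- Suppose the target density satisfies π ≤ M for some constant M ∈ (0, +∞), and let ‖·‖ be a norm on ℝ^d with ‖·‖ ≥ C₀′‖·‖₁ for some C₀′ ∈ (0, +∞). Set C₀ = C₀′(1 − 1/(1+d)) / (2 M^{1/d} (1+d)^{1/d}). Then for every θ ∈ Θ and every t ≥ 1, the Metropolis–Hastings kernel satisfies W_{‖·‖}(P^t(θ,·), Π) ≥ C₀ (1 − A(θ))^{t(1 + 1/d)}. -/

import Mathlib

/-!
The rejection part of the Metropolis–Hastings kernel gives the iterate `P^t(θ, ·)` an atom at `θ` of
mass at least `p = (1 - A(θ))^t` (`le_kernelIter_singleton`). Any coupling with `Π` must move this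
atom, whereas `Π`, having density at most `M`, puts mass at most `M (2r)^d` on the sup-norm ball of
radius `r` around `θ`. Hence mass at least `p - M (2r)^d` travels an `ℓ¹`-distance at least `r`
(`wasserstein_atom_bound`). Choosing `r` with `M (2r)^d = p / (1 + d)` gives the stated constant.

The iterates are defined by `Measure.bind`, which is meaningful only for measurable kernels, so joint
measurability of the Metropolis–Hastings kernel is established as well.
-/

open MeasureTheory ENNReal Filter Matrix
open scoped BigOperators NNReal

noncomputable section

/-- The set of couplings of two measures. -/
def couplings {E : Type*} [MeasurableSpace E] (μ ν : Measure E) : Set (Measure (E × E)) :=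
  {ξ | ξ.map Prod.fst = μ ∧ ξ.map Prod.snd = ν}

/-- The `L₁` Wasserstein (transportation) distance with cost `ρ`, valued in `ℝ≥0∞`:
`W_ρ(μ, ν) = inf over couplings ξ of ∫ ρ dξ`. -/
def wassersteinDist {E : Type*} [MeasurableSpace E] (ρ : E → E → ℝ)
    (μ ν : Measure E) : ℝ≥0∞ :=
  ⨅ ξ ∈ couplings μ ν, ∫⁻ p, ENNReal.ofReal (ρ p.1 p.2) ∂ξ

/-- `ρ` is a lower semicontinuous metric on the set `Θ`. -/
def IsLSCMetricOn {E : Type*} [TopologicalSpace E] (Θ : Set E) (ρ : E → E → ℝ) : Prop :=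
  LowerSemicontinuousOn (fun p : E × E => ρ p.1 p.2) (Θ ×ˢ Θ) ∧
  (∀ x ∈ Θ, ∀ y ∈ Θ, 0 ≤ ρ x y) ∧ (∀ x ∈ Θ, ρ x x = 0) ∧
  (∀ x ∈ Θ, ∀ y ∈ Θ, ρ x y = 0 → x = y) ∧
  (∀ x ∈ Θ, ∀ y ∈ Θ, ρ x y = ρ y x) ∧
  (∀ x ∈ Θ, ∀ y ∈ Θ, ∀ z ∈ Θ, ρ x z ≤ ρ x y + ρ y z)

/-- Metropolis–Hastings acceptance ratio for target density `π` and proposal density `q`. -/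
def mhAccept {E : Type*} (π : E → ℝ) (q : E → E → ℝ) (θ θ' : E) : ℝ :=
  if 0 < π θ * q θ θ' then min (π θ' * q θ' θ / (π θ * q θ θ')) 1 else 1

/-- Metropolis–Hastings overall acceptance probability `A(θ)`. -/
def mhAcceptProb {E : Type*} [MeasureSpace E] (Θ : Set E) (π : E → ℝ) (q : E → E → ℝ)
    (θ : E) : ℝ :=
  ∫ θ' in Θ, mhAccept π q θ θ' * q θ θ'

/-- The Metropolis–Hastings Markov kernel
`P(θ, B) = ∫_B a(θ,θ') q(θ,θ') dθ' + δ_θ(B) (1 - A(θ))`. -/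
def mhKernel {E : Type*} [MeasureSpace E] (Θ : Set E) (π : E → ℝ) (q : E → E → ℝ)
    (θ : E) : Measure E :=
  (volume.restrict Θ).withDensity (fun θ' => ENNReal.ofReal (mhAccept π q θ θ' * q θ θ')) +
    (ENNReal.ofReal (1 - mhAcceptProb Θ π q θ)) • Measure.dirac θ

/-- `t`-fold iterate `P^t` of a Markov kernel, with `P^0(θ, ·) = δ_θ`. -/
def kernelIter {E : Type*} [MeasurableSpace E] (P : E → Measure E) : ℕ → E → Measure E
  | 0, θ => Measure.dirac θ
  | (t + 1), θ => (P θ).bind (kernelIter P t)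

end

lemma measurable_mhAccept {E : Type*} [MeasurableSpace E] {π : E → ℝ} {q : E → E → ℝ}
    (hπ : Measurable π) (hq : Measurable (Function.uncurry q)) :
    Measurable (Function.uncurry (mhAccept π q)) := by
  have h1 : Measurable fun x : E × E => π x.1 * q x.1 x.2 := (hπ.comp measurable_fst).mul hq
  have h2 : Measurable fun x : E × E => π x.2 * q x.2 x.1 :=
    (hπ.comp measurable_snd).mul (hq.comp measurable_swap)
  exact Measurable.ite (measurableSet_lt measurable_const h1)
    ((h2.div h1).min measurable_const) measurable_const

lemma mhAccept_nonneg {E : Type*} {π : E → ℝ} {q : E → E → ℝ}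
    (hπ : ∀ θ, 0 ≤ π θ) (hq : ∀ θ θ', 0 ≤ q θ θ') (θ θ' : E) : 0 ≤ mhAccept π q θ θ' := by
  unfold mhAccept
  have := hπ θ; have := hπ θ'; have := hq θ θ'; have := hq θ' θ
  split_ifs <;> positivity

lemma mhAccept_le_one {E : Type*} (π : E → ℝ) (q : E → E → ℝ) (θ θ' : E) :
    mhAccept π q θ θ' ≤ 1 := by
  unfold mhAccept
  split_ifs
  · exact min_le_right _ _
  · exact le_rfl

lemma measurable_mhKernel {E : Type*} [MeasureSpace E] [SFinite (volume : Measure E)] {Θ : Set E}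
    {π : E → ℝ} {q : E → E → ℝ}
    (hπ : Measurable π) (hq : Measurable (Function.uncurry q)) :
    Measurable (mhKernel Θ π q) := by
  have haq : Measurable fun x : E × E => mhAccept π q x.1 x.2 * q x.1 x.2 :=
    (measurable_mhAccept hπ hq).mul hq
  have hA : Measurable (mhAcceptProb Θ π q) :=
    (haq.stronglyMeasurable.integral_prod_right (ν := volume.restrict Θ)).measurable
  refine Measure.measurable_of_measurable_coe _ fun s hs => ?_
  have h1 : ∀ θ, mhKernel Θ π q θ s =
      (∫⁻ θ' in s, ENNReal.ofReal (mhAccept π q θ θ' * q θ θ') ∂(volume.restrict Θ)) +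
        ENNReal.ofReal (1 - mhAcceptProb Θ π q θ) * s.indicator 1 θ := by
    intro θ
    simp [mhKernel, withDensity_apply _ hs, Measure.dirac_apply' θ hs]
  simp_rw [h1]
  refine Measurable.add ?_ ?_
  · exact haq.ennreal_ofReal.lintegral_prod_right'
  · exact (measurable_const.sub hA).ennreal_ofReal.mul (measurable_one.indicator hs)

lemma measurable_kernelIter {E : Type*} [MeasurableSpace E] {P : E → Measure E}
    (hP : Measurable P) (t : ℕ) : Measurable (kernelIter P t) := by
  induction t with
  | zero => exact Measure.measurable_dirac
  | succ t ih => exact (Measure.measurable_bind' ih).comp hP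

/-- A kernel holding at `θ` with probability at least `c` stays there for `t` steps with probability
at least `c ^ t`. -/
lemma le_kernelIter_singleton {E : Type*} [MeasurableSpace E] [MeasurableSingletonClass E]
    {P : E → Measure E} (hP : Measurable P) {θ : E} {c : ℝ≥0∞}
    (hc : c • Measure.dirac θ ≤ P θ) (t : ℕ) :
    c ^ t ≤ kernelIter P t θ {θ} := by
  induction t with
  | zero => simp [kernelIter]
  | succ t ih =>
    calc c ^ (t + 1) = c * c ^ t := pow_succ' _ _
      _ ≤ c * kernelIter P t θ {θ} := by gcongr
      _ = ∫⁻ x, kernelIter P t x {θ} ∂(c • Measure.dirac θ) := by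
        rw [lintegral_smul_measure, lintegral_dirac, smul_eq_mul]
      _ ≤ ∫⁻ x, kernelIter P t x {θ} ∂(P θ) := lintegral_mono' hc le_rfl
      _ = kernelIter P (t + 1) θ {θ} := by
        rw [kernelIter, Measure.bind_apply (measurableSet_singleton θ)
          (measurable_kernelIter hP t).aemeasurable]

/-- Transporting an atom of mass `m` at `θ` onto a measure giving mass at most `b` to a closed
sup-norm ball of radius `r` costs at least `C r (m - b)`, when the cost dominates `C` times
the `ℓ¹`-distance. -/
lemma wasserstein_atom_bound {d : ℕ} {N : (Fin d → ℝ) → ℝ} {C : ℝ} (hC : 0 ≤ C)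
    (hN : ∀ x, C * (∑ i, |x i|) ≤ N x) {μ ν : Measure (Fin d → ℝ)} {θ : Fin d → ℝ} {r : ℝ}
    {m b : ℝ≥0∞} (hm : m ≤ μ {θ}) (hb : ν (Metric.closedBall θ r) ≤ b) :
    ENNReal.ofReal (C * r) * (m - b) ≤ wassersteinDist (fun x y => N (x - y)) μ ν := by
  refine le_iInf₂ fun ξ hξ => ?_
  obtain ⟨h1, h2⟩ := hξ
  set S : Set ((Fin d → ℝ) × (Fin d → ℝ)) :=
    (Prod.fst ⁻¹' {θ}) \ (Prod.snd ⁻¹' Metric.closedBall θ r) with hS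
  have hSm : MeasurableSet S :=
    (measurable_fst (measurableSet_singleton θ)).diff
      (measurable_snd Metric.isClosed_closedBall.measurableSet)
  have hmass : m - b ≤ ξ S := by
    refine le_trans ?_ le_measure_sdiff
    rw [← Measure.map_apply measurable_fst (measurableSet_singleton θ),
      ← Measure.map_apply measurable_snd Metric.isClosed_closedBall.measurableSet, h1, h2]
    exact tsub_le_tsub hm hb
  calc ENNReal.ofReal (C * r) * (m - b) ≤ ENNReal.ofReal (C * r) * ξ S := by gcongr
    _ = ∫⁻ p, S.indicator (fun _ => ENNReal.ofReal (C * r)) p ∂ξ :=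
      (lintegral_indicator_const hSm _).symm
    _ ≤ ∫⁻ p, ENNReal.ofReal (N (p.1 - p.2)) ∂ξ := by
      refine lintegral_mono (Set.indicator_le fun p hp => ?_)
      obtain ⟨hp1, hp2⟩ := hp
      simp only [Set.mem_preimage, Set.mem_singleton_iff] at hp1
      simp only [Set.mem_preimage, Metric.mem_closedBall, not_le] at hp2
      refine ENNReal.ofReal_le_ofReal (le_trans (mul_le_mul_of_nonneg_left ?_ hC) (hN _))
      refine hp2.le.trans ?_
      rw [← hp1, dist_comm, dist_eq_norm]
      refine (pi_norm_le_iff_of_nonneg (Finset.sum_nonneg fun i _ => abs_nonneg _)).2 fun i => ?_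
      exact Finset.single_le_sum (f := fun i => |(p.1 - p.2) i|)
        (fun i _ => abs_nonneg _) (Finset.mem_univ i)

lemma mhAcceptProb_le_one {E : Type*} [MeasureSpace E] {Θ : Set E} {π : E → ℝ} {q : E → E → ℝ}
    (hπ : ∀ θ, 0 ≤ π θ) (hq : Measurable (Function.uncurry q)) (hq0 : ∀ θ θ', 0 ≤ q θ θ') {θ : E}
    (hQ : IsProbabilityMeasure
      ((volume.restrict Θ).withDensity fun θ' => ENNReal.ofReal (q θ θ'))) :
    mhAcceptProb Θ π q θ ≤ 1 := by
  have hqθ : Measurable (q θ) := hq.comp measurable_prodMk_left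
  have hl : ∫⁻ θ' in Θ, ENNReal.ofReal (q θ θ') = 1 := by
    have := hQ.measure_univ
    rwa [withDensity_apply _ MeasurableSet.univ, Measure.restrict_univ] at this
  have hint : Integrable (q θ) (volume.restrict Θ) :=
    (lintegral_ofReal_ne_top_iff_integrable hqθ.aestronglyMeasurable
      (ae_of_all _ (hq0 θ))).1 (by rw [hl]; simp)
  calc mhAcceptProb Θ π q θ ≤ ∫ θ' in Θ, q θ θ' :=
        integral_mono_of_nonneg
          (ae_of_all _ fun θ' => mul_nonneg (mhAccept_nonneg hπ hq0 θ θ') (hq0 θ θ')) hint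
          (ae_of_all _ fun θ' => mul_le_of_le_one_left (hq0 θ θ') (mhAccept_le_one π q θ θ'))
    _ = 1 := by
      rw [integral_eq_lintegral_of_nonneg_ae (ae_of_all _ (hq0 θ)) hqθ.aestronglyMeasurable, hl]
      simp

/-- Theorem 1, lower bound for Metropolis–Hastings in Wasserstein distance.
If the target density satisfies `π ≤ M` and `‖·‖` is a norm on `ℝ^d` with
`‖x‖ ≥ C₀' ‖x‖₁`, then with
`C₀ = C₀' (1 - 1/(1+d)) / (2 M^{1/d} (1+d)^{1/d})`, for every `θ ∈ Θ` and `t ≥ 1`,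
`W_{‖·‖}(P^t(θ,·), Π) ≥ C₀ (1 - A(θ))^{t (1 + 1/d)}`. -/
theorem mh_wasserstein_lower_bound
    {d : ℕ} (hd : 0 < d)
    (Θ : Set (Fin d → ℝ)) (hΘne : Θ.Nonempty) (hΘcl : IsClosed Θ)
    (π : (Fin d → ℝ) → ℝ) (q : (Fin d → ℝ) → (Fin d → ℝ) → ℝ)
    (hπmeas : Measurable π) (hπ0 : ∀ θ, 0 ≤ π θ)
    (hqmeas : Measurable (Function.uncurry q)) (hq0 : ∀ θ θ', 0 ≤ q θ θ')
    (hqpos : ∀ θ' ∈ Θ, 0 < π θ' → ∀ θ ∈ Θ, 0 < q θ θ')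
    -- `Π` is a probability measure on `Θ` with Lebesgue density `π`
    (Pi : Measure (Fin d → ℝ)) [IsProbabilityMeasure Pi]
    (hPi : Pi = (volume.restrict Θ).withDensity fun θ => ENNReal.ofReal (π θ))
    -- each proposal `Q(θ, ·)` is a probability measure on `Θ` with density `q(θ, ·)`,
    -- different from `Π`
    (hQprob : ∀ θ ∈ Θ, IsProbabilityMeasure
      ((volume.restrict Θ).withDensity fun θ' => ENNReal.ofReal (q θ θ')))
    (hQnePi : ∀ θ ∈ Θ,
      ((volume.restrict Θ).withDensity fun θ' => ENNReal.ofReal (q θ θ')) ≠ Pi)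
    -- the target density is bounded: `π ≤ M`
    (M : ℝ) (hM : 0 < M) (hπM : ∀ θ, π θ ≤ M)
    -- `N` is a norm on `ℝ^d`
    (N : (Fin d → ℝ) → ℝ)
    (hNadd : ∀ x y, N (x + y) ≤ N x + N y)
    (hNsmul : ∀ (c : ℝ) x, N (c • x) = |c| * N x)
    (hNzero : ∀ x, N x = 0 ↔ x = 0)
    -- `‖·‖ ≥ C₀' ‖·‖₁`
    (C₀' : ℝ) (hC₀' : 0 < C₀') (hNlb : ∀ x, C₀' * (∑ i, |x i|) ≤ N x)
    (C₀ : ℝ)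
    (hC₀ : C₀ = C₀' * (1 - 1 / (1 + (d : ℝ))) /
      (2 * M ^ ((1 : ℝ) / d) * (1 + (d : ℝ)) ^ ((1 : ℝ) / d))) :
    ∀ θ ∈ Θ, ∀ t : ℕ, 1 ≤ t →
      ENNReal.ofReal
          (C₀ * (1 - mhAcceptProb Θ π q θ) ^ ((t : ℝ) * (1 + 1 / (d : ℝ)))) ≤
        wassersteinDist (fun x y => N (x - y)) (kernelIter (mhKernel Θ π q) t θ) Pi := by
  intro θ hθ t _
  have hd' : (0 : ℝ) < d := by exact_mod_cast hd
  have hA : 0 ≤ 1 - mhAcceptProb Θ π q θ :=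
    sub_nonneg.2 (mhAcceptProb_le_one hπ0 hqmeas hq0 (hQprob θ hθ))
  set a : ℝ := 1 - mhAcceptProb Θ π q θ with ha
  set p : ℝ := a ^ t with hp
  have hp0 : 0 ≤ p := pow_nonneg hA t
  have hatom : ENNReal.ofReal p ≤ kernelIter (mhKernel Θ π q) t θ {θ} := by
    rw [hp, ENNReal.ofReal_pow hA]
    exact le_kernelIter_singleton (measurable_mhKernel hπmeas hqmeas)
      (Measure.le_add_left le_rfl) t
  -- The radius solves `M (2r)^d = p / (1 + d)`.
  set s : ℝ := (p / (M * (1 + d))) ^ ((1 : ℝ) / d) with hs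
  have hs0 : 0 ≤ s := by positivity
  have hsd : s ^ d = p / (M * (1 + d)) := by
    rw [hs, one_div, Real.rpow_inv_natCast_pow (by positivity) hd.ne']
  have hball : Pi (Metric.closedBall θ (s / 2)) ≤ ENNReal.ofReal (p / (1 + d)) := by
    have hmeas : MeasurableSet (Metric.closedBall θ (s / 2)) :=
      Metric.isClosed_closedBall.measurableSet
    calc Pi (Metric.closedBall θ (s / 2))
        = ∫⁻ x in Metric.closedBall θ (s / 2), ENNReal.ofReal (π x) ∂(volume.restrict Θ) := by
          rw [hPi, withDensity_apply _ hmeas]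
      _ ≤ ∫⁻ _ in Metric.closedBall θ (s / 2), ENNReal.ofReal M ∂(volume.restrict Θ) :=
          lintegral_mono fun x => ENNReal.ofReal_le_ofReal (hπM x)
      _ = ENNReal.ofReal M * (volume.restrict Θ) (Metric.closedBall θ (s / 2)) :=
          setLIntegral_const _ _
      _ ≤ ENNReal.ofReal M * volume (Metric.closedBall θ (s / 2)) := by
          gcongr
          exact Measure.restrict_le_self
      _ = ENNReal.ofReal (p / (1 + d)) := by
          rw [Real.volume_pi_closedBall θ (by positivity), Fintype.card_fin,
            ← ENNReal.ofReal_mul hM.le]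
          congr 1
          rw [mul_div_cancel₀ s two_ne_zero, hsd]
          field_simp
  refine le_trans (le_of_eq ?_) (wasserstein_atom_bound hC₀'.le hNlb hatom hball)
  rw [← ENNReal.ofReal_sub _ (by positivity), ← ENNReal.ofReal_mul (by positivity)]
  congr 1
  have hpow : a ^ ((t : ℝ) * (1 + 1 / (d : ℝ))) = p * p ^ ((1 : ℝ) / d) := by
    rw [Real.rpow_mul hA, Real.rpow_natCast, ← hp,
      Real.rpow_add_of_nonneg hp0 zero_le_one (by positivity), Real.rpow_one]
  rw [hpow, hC₀, hs, Real.div_rpow hp0 (by positivity), Real.mul_rpow hM.le (by positivity)]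
  field_simp
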